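/- For all x, y ∈ T, the integral π^{−1/2} ∫₀^∞ H_t(x,y) t^{−1/2} dt converges and equals q^{−ℓ(x)/2} · G(d(x,y)) · q^{−ℓ(y)/2}, where G(n) = Σ_{k≥0} q^{−(n+2k)/2} k̃_ℤ(n+2k+1) (an absolutely convergent series). In other words, the integral kernel of 𝓛^{−1/2} with respect to μ is K(x,y) = q^{−ℓ(x)/2} G(d(x,y)) q^{−ℓ(y)/2}. -/

import Mathlib

open MeasureTheory ENNReal Set Function
open scoped NNReal ENNReal Classical

noncomputable section

/-- A homogeneous tree of degree `q+1` with a distinguished end (mythical ancestor),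
encoded through its graph distance `dist`, horocyclic level function `level`,
and predecessor map `pred`. -/
structure FlowTree (q : ℕ) where
  V : Type
  countableV : Countable V
  dist : V → V → ℕ
  level : V → ℤ
  pred : V → V
  dist_self : ∀ x, dist x x = 0
  eq_of_dist_eq_zero : ∀ x y, dist x y = 0 → x = y
  dist_comm : ∀ x y, dist x y = dist y x
  dist_triangle : ∀ x y z, dist x z ≤ dist x y + dist y z
  level_pred : ∀ x, level (pred x) = level x + 1
  succ_finite : ∀ x, Set.Finite {y | pred y = x}
  succ_card : ∀ x, Nat.card {y // pred y = x} = q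
  dist_le : ∀ (x y : V) (n m : ℕ), pred^[n] x = pred^[m] y → dist x y ≤ n + m
  dist_spec : ∀ x y, ∃ n m : ℕ, pred^[n] x = pred^[m] y ∧ n + m = dist x y

namespace FlowTree

variable {q : ℕ} (S : FlowTree q)

/-- The canonical flow measure weight `μ(x) = q^{ℓ(x)}`, as an extended nonnegative real. -/
def w (x : S.V) : ℝ≥0∞ := (q : ℝ≥0∞) ^ ((S.level x : ℤ) : ℝ)

/-- The canonical flow measure weight `μ(x) = q^{ℓ(x)}`, as a real number. -/
def wR (x : S.V) : ℝ := (q : ℝ) ^ (S.level x)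

/-- The canonical flow measure of a set `E ⊆ T`. -/
def muS (E : Set S.V) : ℝ≥0∞ := ∑' x : E, S.w x

/-- The `L^p(μ)` (quasi)norm, `p ∈ [1,∞]`. -/
def lpNorm (p : ℝ≥0∞) {E : Type*} [NNNorm E] (f : S.V → E) : ℝ≥0∞ :=
  if p = ∞ then ⨆ x, (‖f x‖₊ : ℝ≥0∞)
  else (∑' x, (‖f x‖₊ : ℝ≥0∞) ^ p.toReal * S.w x) ^ (1 / p.toReal)

/-- The weak `L^{1,∞}(μ)` quasinorm `sup_{λ>0} λ · μ({|f| > λ})`. -/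
def wkNorm {E : Type*} [NNNorm E] (f : S.V → E) : ℝ≥0∞ :=
  ⨆ t : ℝ≥0, (t : ℝ≥0∞) * S.muS {x | t < ‖f x‖₊}

/-- `Σf(x) = f(𝔭(x))`. -/
def sig (f : S.V → ℂ) : S.V → ℂ := fun x => f (S.pred x)

/-- `Σ*f(x) = (1/q) Σ_{y ∈ succ(x)} f(y)`. -/
def sigStar (f : S.V → ℂ) : S.V → ℂ :=
  fun x => (q : ℂ)⁻¹ * ∑' y : {y | S.pred y = x}, f y.1

/-- The flow gradient `∇ = id − Σ`. -/
def grad (f : S.V → ℂ) : S.V → ℂ := fun x => f x - f (S.pred x)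

/-- `∇* = id − Σ*`. -/
def gradStar (f : S.V → ℂ) : S.V → ℂ := fun x => f x - S.sigStar f x

/-- The modulus of the gradient `Df(x) = Σ_{y ∼ x} |f(x) − f(y)|`. -/
def Dmod (f : S.V → ℂ) : S.V → ℝ :=
  fun x => ∑' y : {y | S.dist x y = 1}, ‖f x - f y.1‖

/-- `Σ̃_n = Σ^n` for `n ≥ 0` and `(Σ*)^{−n}` for `n < 0`. -/
def sigTilde (n : ℤ) (f : S.V → ℂ) : S.V → ℂ :=
  if 0 ≤ n then (S.sig)^[n.toNat] f else (S.sigStar)^[(-n).toNat] f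

/-- `Σ*` acting on real-valued functions. -/
def sigStarR (f : S.V → ℝ) : S.V → ℝ :=
  fun x => (q : ℝ)⁻¹ * ∑' y : {y | S.pred y = x}, f y.1

/-- The flow Laplacian `𝓛 = id − (Σ + Σ*)/2`, acting pointwise on real functions. -/
def lapR (f : S.V → ℝ) : S.V → ℝ :=
  fun x => f x - (f (S.pred x) + S.sigStarR f x) / 2

/-- `δ_y/μ(y)`, the normalized delta at `y`. -/
def deltaMu (y : S.V) : S.V → ℝ := fun z => if z = y then (S.wR y)⁻¹ else 0

/-- The heat kernel `H_t(x,y)` of the flow Laplacian, i.e. `(e^{−t𝓛} (δ_y/μ(y)))(x)`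
computed via the exponential power series of the bounded operator `𝓛`. -/
def Hker (t : ℝ) (x y : S.V) : ℝ :=
  ∑' n : ℕ, ((-t) ^ n / (n.factorial : ℝ)) * ((S.lapR)^[n] (S.deltaMu y)) x

/-- The integral kernel `K(x,y)` of `𝓛^{−1/2}`, by subordination. -/
def Kker (x y : S.V) : ℝ :=
  (Real.sqrt Real.pi)⁻¹ * ∫ t in Set.Ioi (0 : ℝ), S.Hker t x y * t ^ (-(1 : ℝ)/2)

/-- The Riesz transform `𝓡 = ∇𝓛^{−1/2}`, defined on finitely supported functions. -/
def riesz (f : S.V → ℂ) : S.V → ℂ :=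
  fun x => ∑' y, ((S.Kker x y - S.Kker (S.pred x) y : ℝ) : ℂ) * f y * (S.wR y : ℂ)

/-- The integral operator with almost-radial kernel `q^{−ℓ(x)/2} G(d(x,y)) q^{−ℓ(y)/2}`. -/
def kernelOp (G : ℕ → ℂ) (f : S.V → ℂ) : S.V → ℂ :=
  fun x => ∑' y, (((q : ℝ) ^ (-((S.level x : ℤ) : ℝ)/2) * (q : ℝ) ^ (-((S.level y : ℤ) : ℝ)/2) : ℝ) : ℂ)
    * G (S.dist x y) * f y * (S.wR y : ℂ)

/-- The ε-horizontal gradient `∇_ε f(x) = (1/q) Σ_{y ∈ succ(x)} ε(y) f(y)`. -/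
def hgrad (ε f : S.V → ℂ) : S.V → ℂ :=
  fun x => (q : ℂ)⁻¹ * ∑' y : {y | S.pred y = x}, ε y.1 * f y.1

/-- The adjoint ε-horizontal gradient `∇_ε* f(x) = conj(ε(x)) f(𝔭(x))`. -/
def hgradStar (ε f : S.V → ℂ) : S.V → ℂ :=
  fun x => (starRingEnd ℂ) (ε x) * f (S.pred x)

/-- `‖ε‖_∞`. -/
def epsSup (ε : S.V → ℂ) : ℝ≥0∞ := ⨆ x, (‖ε x‖₊ : ℝ≥0∞)

/-- The `L²(μ)` inner product. -/
def inner2 (f g : S.V → ℂ) : ℂ := ∑' x, f x * (starRingEnd ℂ) (g x) * (S.wR x : ℂ)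

/-- `y ≤ x` iff `d(x,y) = ℓ(x) − ℓ(y)`. -/
def le' (y x : S.V) : Prop := (S.dist x y : ℤ) = S.level x - S.level y

/-- Admissible trapezoids of `(T,μ)`. -/
def IsAdmissibleTrapezoid (F : Set S.V) : Prop :=
  (∃ x, F = {x}) ∨
  ∃ (x₀ : S.V) (h1 h2 : ℕ), 0 < h1 ∧ 2 * h1 ≤ h2 ∧ h2 ≤ 12 * h1 ∧
    F = {x | S.le' x x₀ ∧ S.level x₀ - (h2 : ℤ) < S.level x ∧ S.level x ≤ S.level x₀ - (h1 : ℤ)}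

/-- `(1,∞)`-atoms of `(T,μ)`. -/
def IsOneInftyAtom (a : S.V → ℂ) : Prop :=
  ∃ F : Set S.V, S.IsAdmissibleTrapezoid F ∧ Function.support a ⊆ F ∧
    (∑' x, a x * (S.wR x : ℂ)) = 0 ∧ ∀ x, (‖a x‖₊ : ℝ≥0∞) ≤ (S.muS F)⁻¹

end FlowTree

namespace ZRiesz

/-- The discrete Laplacian on `ℤ`. -/
def deltaZ (F : ℤ → ℝ) : ℤ → ℝ := fun n => F n - (F (n + 1) + F (n - 1)) / 2

/-- The heat kernel `h_t^ℤ = e^{−tΔ_ℤ} δ_0` on `ℤ`, via the exponential power series. -/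
def heatZ (t : ℝ) (n : ℤ) : ℝ :=
  ∑' k : ℕ, ((-t) ^ k / (k.factorial : ℝ)) *
    (deltaZ^[k] (fun m => if m = 0 then (1 : ℝ) else 0)) n

/-- Kernel of the Riesz transform on `ℤ`: `k_ℤ(n) = π^{−1/2} ∫₀^∞ (∇_ℤ h_t^ℤ)(n) t^{−1/2} dt`. -/
def kZ (n : ℤ) : ℝ :=
  (Real.sqrt Real.pi)⁻¹ * ∫ t in Set.Ioi (0 : ℝ), (heatZ t n - heatZ t (n + 1)) * t ^ (-(1 : ℝ)/2)

/-- Kernel of the skew-symmetric part: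
`k̃_ℤ(n) = π^{−1/2} ∫₀^∞ (∇̃_ℤ h_t^ℤ)(n) t^{−1/2} dt`. -/
def ktZ (n : ℤ) : ℝ :=
  (Real.sqrt Real.pi)⁻¹ *
    ∫ t in Set.Ioi (0 : ℝ), (heatZ t (n - 1) - heatZ t (n + 1)) * t ^ (-(1 : ℝ)/2)

/-- The closed formula `k̃_ℤ(m) = (2√2/π) m/(m² − 1/4)`. -/
def ktZc (m : ℤ) : ℝ := (2 * Real.sqrt 2 / Real.pi) * (m : ℝ) / ((m : ℝ) ^ 2 - 1/4)

/-- `G(n) = Σ_{k≥0} q^{−(n+2k)/2} k̃_ℤ(n+2k+1)` (subordination kernel version). -/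
def Gint (q : ℕ) (n : ℕ) : ℝ :=
  ∑' k : ℕ, (q : ℝ) ^ (-(((n : ℝ)) + 2 * (k : ℝ))/2) * ktZ ((n : ℤ) + 2 * (k : ℤ) + 1)

/-- `G(n) = Σ_{k≥0} q^{−(n+2k)/2} k̃_ℤ(n+2k+1)` (closed formula version). -/
def Gc (q : ℕ) (n : ℕ) : ℝ :=
  ∑' k : ℕ, (q : ℝ) ^ (-(((n : ℝ)) + 2 * (k : ℝ))/2) * ktZc ((n : ℤ) + 2 * (k : ℤ) + 1)

/-- The `ℓ^p(ℤ)` norm. -/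
def zlpNorm (p : ℝ≥0∞) (F : ℤ → ℂ) : ℝ≥0∞ :=
  if p = ∞ then ⨆ n, (‖F n‖₊ : ℝ≥0∞)
  else (∑' n : ℤ, (‖F n‖₊ : ℝ≥0∞) ^ p.toReal) ^ (1 / p.toReal)

/-- The `ℓ^{1,∞}(ℕ)` quasinorm. -/
def natWk (F : ℕ → ℂ) : ℝ≥0∞ :=
  ⨆ t : ℝ≥0, (t : ℝ≥0∞) * ∑' (_ : {n : ℕ | t < ‖F n‖₊}), (1 : ℝ≥0∞)

end ZRiesz

/-- The punctured boundary `Ω = ∂T \ {ω_*}` of the tree, together with the measure `ν`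
with `ν(Ω_x) = q^{ℓ(x)}`.  `vert ω n` is the vertex `ω_n` of level `n` on the geodesic
`[ω, ω_*]`. -/
structure FlowTreeBoundary {q : ℕ} (S : FlowTree q) where
  Ω : Type
  mΩ : MeasurableSpace Ω
  ν : @MeasureTheory.Measure Ω mΩ
  vert : Ω → ℤ → S.V
  level_vert : ∀ ω n, S.level (vert ω n) = n
  pred_vert : ∀ ω n, S.pred (vert ω n) = vert ω (n + 1)
  vert_surj : ∀ x : S.V, ∃ ω, vert ω (S.level x) = x
  vert_inj : ∀ ω ω', (∀ n, vert ω n = vert ω' n) → ω = ω'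
  meas_cone : ∀ x : S.V, @MeasurableSet Ω mΩ {ω | vert ω (S.level x) = x}
  nu_cone : ∀ x : S.V, ν {ω | vert ω (S.level x) = x} = (q : ℝ≥0∞) ^ ((S.level x : ℤ) : ℝ)

attribute [instance] FlowTreeBoundary.mΩ

namespace FlowTreeBoundary

variable {q : ℕ} {S : FlowTree q} (B : FlowTreeBoundary S)

/-- The product measure `ν × #` on `Ω × ℤ`. -/
def pm : MeasureTheory.Measure (B.Ω × ℤ) := B.ν.prod MeasureTheory.Measure.count

/-- `Ω_x = {ω : x ∈ [ω, ω_*]}`. -/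
def cone (x : S.V) : Set B.Ω := {ω | B.vert ω (S.level x) = x}

/-- The lifting operator `Φf(ω,n) = f(ω_n)`. -/
def lift (f : S.V → ℂ) : B.Ω × ℤ → ℂ := fun p => f (B.vert p.1 p.2)

/-- The lifting operator on `ℝ≥0∞`-valued functions. -/
def liftNN (f : S.V → ℝ≥0∞) : B.Ω × ℤ → ℝ≥0∞ := fun p => f (B.vert p.1 p.2)

/-- The adjoint `Φ*g(x) = ν(Ω_x)^{−1} ∫_{Ω_x} g(ω, ℓ(x)) dν(ω)`. -/
def liftStar (g : B.Ω × ℤ → ℂ) : S.V → ℂ :=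
  fun x => ((B.ν (B.cone x)).toReal)⁻¹ * ∫ ω in B.cone x, g (ω, S.level x) ∂B.ν

/-- The adjoint `Φ*` on `ℝ≥0∞`-valued functions. -/
def liftStarNN (g : B.Ω × ℤ → ℝ≥0∞) : S.V → ℝ≥0∞ :=
  fun x => (B.ν (B.cone x))⁻¹ * ∫⁻ ω in B.cone x, g (ω, S.level x) ∂B.ν

end FlowTreeBoundary

/-- The weak `L^{1,∞}(μ)` quasinorm with respect to a measure. -/
def wkMeas {α : Type*} [MeasurableSpace α] (μ : MeasureTheory.Measure α) (g : α → ℂ) : ℝ≥0∞ :=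
  ⨆ t : ℝ≥0, (t : ℝ≥0∞) * μ {a | t < ‖g a‖₊}

/-- The weak `L^{1,∞}(μ)` quasinorm for `ℝ≥0∞`-valued functions. -/
def wkMeasNN {α : Type*} [MeasurableSpace α] (μ : MeasureTheory.Measure α) (g : α → ℝ≥0∞) :
    ℝ≥0∞ :=
  ⨆ t : ℝ≥0, (t : ℝ≥0∞) * μ {a | (t : ℝ≥0∞) < g a}

end

/-! The transform `f ↦ Σ_{k≥0} q^{−(n+2k)/2} f(n+2k+1)` (`ZRiesz.radialSum`) intertwines `Δ_ℤ` on
bounded odd functions with the action of `𝓛` on almost radial functions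
`x ↦ q^{−ℓ(x)/2} G(d(x,y)) q^{−ℓ(y)/2}`, and it sends `∇̃_ℤ δ_0` to the profile of `δ_y/μ(y)`.
Applied to each term of the exponential series, this shows that `H_t(x,y)` is almost radial with
profile the transform of `∇̃_ℤ h_t^ℤ`. By Fourier analysis on `ℤ`,
`|∇̃_ℤ h_t^ℤ(n)| ≤ (4/π) min(1, 1/t)` uniformly in `n`, so the transform can be integrated against
`t^{−1/2}` term by term, which replaces `∇̃_ℤ h_t^ℤ` by `k̃_ℤ`. -/


section DominatedSeries

variable {α ι E : Type*} [MeasurableSpace α] {μ : Measure α} [Countable ι]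
  [NormedAddCommGroup E] {F : ι → α → E} {bound : ι → α → ℝ}

theorem aestronglyMeasurable_tsum (hF : ∀ i, AEStronglyMeasurable (F i) μ)
    (hsum : ∀ᵐ a ∂μ, Summable fun i => F i a) :
    AEStronglyMeasurable (fun a => ∑' i, F i a) μ := by
  refine aestronglyMeasurable_of_tendsto_ae Filter.atTop (f := fun s a => ∑ i ∈ s, F i a)
    (fun s => Finset.aestronglyMeasurable_fun_sum s fun i _ => hF i) ?_
  filter_upwards [hsum] with a ha using ha.hasSum

theorem integrable_tsum_of_dominated [CompleteSpace E] (hF : ∀ i, AEStronglyMeasurable (F i) μ)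
    (hle : ∀ᵐ a ∂μ, ∀ i, ‖F i a‖ ≤ bound i a) (hsum : ∀ᵐ a ∂μ, Summable fun i => bound i a)
    (hint : Integrable (fun a => ∑' i, bound i a) μ) :
    Integrable (fun a => ∑' i, F i a) μ := by
  refine hint.mono' (aestronglyMeasurable_tsum hF ?_) ?_
  · filter_upwards [hle, hsum] with a hle hsum using hsum.of_norm_bounded hle
  · filter_upwards [hle, hsum] with a hle hsum using tsum_of_norm_bounded hsum.hasSum hle

end DominatedSeries

theorem hasSum_integral_exp_mul {α : Type*} [MeasurableSpace α] {μ : Measure α} {f g : α → ℝ}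
    {M : ℝ} (hf : Integrable f μ) (hg : AEStronglyMeasurable g μ) (hM : ∀ᵐ a ∂μ, |g a| ≤ M)
    (s : ℝ) :
    HasSum (fun k : ℕ => s ^ k / k.factorial * ∫ a, g a ^ k * f a ∂μ)
      (∫ a, Real.exp (s * g a) * f a ∂μ) := by
  simp only [← integral_const_mul]
  refine hasSum_integral_of_dominated_convergence
    (fun k a => (|s| * M) ^ k / k.factorial * |f a|) (fun k => ?_) (fun k => ?_) ?_ ?_ ?_
  · exact ((hg.pow k).mul hf.1).const_mul _
  · filter_upwards [hM] with a ha
    rw [← mul_assoc, Real.norm_eq_abs, abs_mul, div_mul_eq_mul_div, ← mul_pow, abs_div, abs_pow,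
      abs_mul, Nat.abs_cast]
    gcongr
  · exact .of_forall fun a => (Real.summable_pow_div_factorial _).mul_right _
  · simpa only [tsum_mul_right] using hf.abs.const_mul _
  · refine .of_forall fun a => ?_
    have h := (NormedSpace.expSeries_div_hasSum_exp (s * g a)).mul_right (f a)
    rw [← Real.exp_eq_exp_ℝ] at h
    refine h.congr_fun fun k => ?_
    rw [mul_pow]
    ring

theorem integrableOn_Ioi_min_one_inv_mul_rpow {s : ℝ} (hs : -1 < s) (hs' : s < 0) :
    IntegrableOn (fun t : ℝ => min 1 t⁻¹ * t ^ s) (Ioi 0) := by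
  rw [← Ioc_union_Ioi_eq_Ioi zero_le_one]
  refine IntegrableOn.union ?_ ?_
  · have hzero : IntegrableOn (fun t : ℝ => t ^ s) (Ioc 0 1) :=
      (intervalIntegrable_iff_integrableOn_Ioc_of_le zero_le_one).1
        (intervalIntegral.intervalIntegrable_rpow' hs)
    refine hzero.congr_fun (fun t ht => ?_) measurableSet_Ioc
    simp only [min_eq_left ((one_le_inv₀ ht.1).2 ht.2), one_mul]
  · have hinfty : IntegrableOn (fun t : ℝ => t ^ (s - 1)) (Ioi 1) :=
      integrableOn_Ioi_rpow_of_lt (by linarith) one_pos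
    refine hinfty.congr_fun (fun t ht => ?_) measurableSet_Ioi
    have ht₀ : 0 < t := one_pos.trans ht
    simp only [min_eq_right (inv_le_one_of_one_le₀ (mem_Ioi.1 ht).le), Real.rpow_sub_one ht₀.ne']
    ring

namespace ZRiesz

/-- The skew gradient `∇̃_ℤ = τ_1 − τ_{−1}`. -/
def skewGrad (F : ℤ → ℝ) : ℤ → ℝ := fun n => F (n - 1) - F (n + 1)

theorem skewGrad_deltaZ (F : ℤ → ℝ) : skewGrad (deltaZ F) = deltaZ (skewGrad F) := by
  ext n
  simp only [skewGrad, deltaZ, add_sub_cancel_right, sub_add_cancel]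
  ring

theorem skewGrad_iterate_deltaZ (F : ℤ → ℝ) (k : ℕ) :
    skewGrad (deltaZ^[k] F) = deltaZ^[k] (skewGrad F) :=
  Function.Commute.iterate_right (f := skewGrad) skewGrad_deltaZ k F

theorem abs_skewGrad_le {F : ℤ → ℝ} {B : ℝ} (hF : ∀ n, |F n| ≤ B) (n : ℤ) :
    |skewGrad F n| ≤ 2 * B :=
  (abs_sub _ _).trans ((add_le_add (hF _) (hF _)).trans_eq (two_mul B).symm)

theorem abs_deltaZ_le {F : ℤ → ℝ} {B : ℝ} (hF : ∀ n, |F n| ≤ B) (n : ℤ) :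
    |deltaZ F n| ≤ 2 * B := by
  have h₀ := abs_le.1 (hF n)
  have h₁ := abs_le.1 (hF (n + 1))
  have h₂ := abs_le.1 (hF (n - 1))
  rw [deltaZ, abs_le]
  constructor <;> linarith

theorem abs_iterate_deltaZ_le {F : ℤ → ℝ} {B : ℝ} (hF : ∀ n, |F n| ≤ B) (k : ℕ) (n : ℤ) :
    |deltaZ^[k] F n| ≤ 2 ^ k * B := by
  induction k generalizing n with
  | zero => simpa using hF n
  | succ k ih =>
    rw [iterate_succ_apply', pow_succ', mul_assoc]
    exact abs_deltaZ_le ih n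

theorem odd_deltaZ {F : ℤ → ℝ} (hF : F.Odd) : (deltaZ F).Odd := fun n => by
  simp only [deltaZ]
  rw [show -n + 1 = -(n - 1) by ring, show -n - 1 = -(n + 1) by ring, hF, hF, hF]
  ring

theorem odd_skewGrad {F : ℤ → ℝ} (hF : F.Even) : (skewGrad F).Odd := fun n => by
  simp only [skewGrad]
  rw [show -n + 1 = -(n - 1) by ring, show -n - 1 = -(n + 1) by ring, hF, hF, neg_sub]

theorem abs_pow_div_factorial_mul_iterate_deltaZ_le {F : ℤ → ℝ} {B : ℝ} (hF : ∀ n, |F n| ≤ B)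
    (t : ℝ) (k : ℕ) (n : ℤ) :
    |(-t) ^ k / k.factorial * deltaZ^[k] F n| ≤ (2 * |t|) ^ k / k.factorial * B := by
  rw [abs_mul, abs_div, abs_pow, abs_neg, Nat.abs_cast, mul_pow, mul_comm ((2 : ℝ) ^ k),
    mul_div_right_comm, mul_assoc]
  gcongr
  exact abs_iterate_deltaZ_le hF k n

theorem abs_single_zero_one_le (n : ℤ) : |(Pi.single 0 1 : ℤ → ℝ) n| ≤ 1 := by
  rw [Pi.single_apply]
  split_ifs <;> simp

theorem even_single_zero_one : (Pi.single 0 1 : ℤ → ℝ).Even := fun n => by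
  simp only [Pi.single_apply, neg_eq_zero]

theorem hasSum_heatZ (t : ℝ) (n : ℤ) :
    HasSum (fun k : ℕ => (-t) ^ k / k.factorial * deltaZ^[k] (Pi.single 0 1) n) (heatZ t n) := by
  have hsingle : (Pi.single 0 1 : ℤ → ℝ) = fun m => if m = 0 then 1 else 0 :=
    funext fun m => Pi.single_apply 0 1 m
  rw [heatZ, ← hsingle]
  exact (((Real.summable_pow_div_factorial _).mul_right 1).of_norm_bounded fun k =>
    abs_pow_div_factorial_mul_iterate_deltaZ_le abs_single_zero_one_le t k n).hasSum

theorem hasSum_skewGrad_heatZ (t : ℝ) (n : ℤ) :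
    HasSum (fun k : ℕ => (-t) ^ k / k.factorial * deltaZ^[k] (skewGrad (Pi.single 0 1)) n)
      (skewGrad (heatZ t) n) := by
  refine ((hasSum_heatZ t (n - 1)).sub (hasSum_heatZ t (n + 1))).congr_fun fun k => ?_
  rw [← skewGrad_iterate_deltaZ, skewGrad, mul_sub]

/-- The Fourier coefficients `π⁻¹ ∫₀^π φ(θ) cos(nθ) dθ` of the even extension of `φ : [0, π] → ℝ`,
without the usual factor `2`, so that `φ = 1` gives the delta function at `0`. They diagonalize
`Δ_ℤ`. -/
noncomputable def cosCoeff (φ : ℝ → ℝ) (n : ℤ) : ℝ :=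
  Real.pi⁻¹ * ∫ θ in (0 : ℝ)..Real.pi, φ θ * Real.cos (n * θ)

theorem intervalIntegrable_mul_cos {φ : ℝ → ℝ} {a b : ℝ} (hφ : IntervalIntegrable φ volume a b)
    (c : ℝ) : IntervalIntegrable (fun θ => φ θ * Real.cos (c * θ)) volume a b :=
  hφ.mul_continuousOn (by fun_prop)

theorem cosCoeff_one : cosCoeff (fun _ => 1) = Pi.single 0 1 := by
  ext n
  rcases eq_or_ne n 0 with rfl | hn
  · simp [cosCoeff, Real.pi_ne_zero]
  · have hn' : (n : ℝ) ≠ 0 := by exact_mod_cast hn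
    simp only [cosCoeff, one_mul]
    rw [intervalIntegral.integral_comp_mul_left _ hn', integral_cos]
    simp [hn]

theorem deltaZ_cosCoeff {φ : ℝ → ℝ} (hφ : IntervalIntegrable φ volume 0 Real.pi) :
    deltaZ (cosCoeff φ) = cosCoeff fun θ => (1 - Real.cos θ) * φ θ := by
  ext n
  have hi (m : ℤ) := intervalIntegrable_mul_cos hφ m
  simp only [deltaZ, cosCoeff]
  rw [← mul_add, ← intervalIntegral.integral_add (hi _) (hi _), mul_div_assoc,
    ← intervalIntegral.integral_div, ← mul_sub,
    ← intervalIntegral.integral_sub (hi _) (((hi _).add (hi _)).div_const _)]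
  congr 2 with θ
  push_cast
  rw [add_mul, sub_mul, one_mul, Real.cos_add, Real.cos_sub]
  ring

theorem iterate_deltaZ_single (k : ℕ) :
    deltaZ^[k] (Pi.single 0 1) = cosCoeff fun θ => (1 - Real.cos θ) ^ k := by
  induction k with
  | zero => simp only [iterate_zero, id_eq, pow_zero, cosCoeff_one]
  | succ k ih =>
    rw [iterate_succ_apply', ih, deltaZ_cosCoeff (Continuous.intervalIntegrable (by fun_prop) _ _)]
    simp only [pow_succ']

theorem heatZ_eq_cosCoeff (t : ℝ) :
    heatZ t = cosCoeff fun θ => Real.exp (-t * (1 - Real.cos θ)) := by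
  ext n
  refine (hasSum_heatZ t n).unique ?_
  have habs (θ : ℝ) : |1 - Real.cos θ| ≤ 2 :=
    abs_le.2 ⟨by linarith [Real.cos_le_one θ], by linarith [Real.neg_one_le_cos θ]⟩
  have hsum := hasSum_integral_exp_mul (μ := volume.restrict (Ioc 0 Real.pi)) (M := 2)
    (f := fun θ => Real.cos (n * θ)) (g := fun θ => 1 - Real.cos θ)
    (Continuous.integrableOn_Ioc (by fun_prop)) (Continuous.aestronglyMeasurable (by fun_prop))
    (.of_forall habs) (-t)
  simp only [iterate_deltaZ_single, cosCoeff, intervalIntegral.integral_of_le Real.pi_pos.le]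
  refine (hsum.mul_left Real.pi⁻¹).congr_fun fun k => ?_
  rw [mul_left_comm]

theorem skewGrad_cosCoeff {φ : ℝ → ℝ} (hφ : IntervalIntegrable φ volume 0 Real.pi) (n : ℤ) :
    skewGrad (cosCoeff φ) n =
      2 / Real.pi * ∫ θ in (0 : ℝ)..Real.pi, φ θ * Real.sin θ * Real.sin (n * θ) := by
  rw [skewGrad, cosCoeff, cosCoeff, ← mul_sub, ← intervalIntegral.integral_sub
    (intervalIntegrable_mul_cos hφ _) (intervalIntegrable_mul_cos hφ _), div_eq_inv_mul, mul_assoc,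
    ← intervalIntegral.integral_const_mul 2]
  congr 2 with θ
  push_cast
  simp only [add_mul, sub_mul, one_mul, Real.cos_add, Real.cos_sub]
  ring

theorem skewGrad_heatZ (t : ℝ) (n : ℤ) :
    skewGrad (heatZ t) n = 2 / Real.pi * ∫ θ in (0 : ℝ)..Real.pi,
      Real.exp (-t * (1 - Real.cos θ)) * Real.sin θ * Real.sin (n * θ) := by
  rw [heatZ_eq_cosCoeff, skewGrad_cosCoeff (Continuous.intervalIntegrable (by fun_prop) _ _)]

theorem continuous_skewGrad_heatZ (n : ℤ) : Continuous fun t => skewGrad (heatZ t) n := by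
  simp only [skewGrad_heatZ]
  exact (intervalIntegral.continuous_parametric_intervalIntegral_of_continuous'
    (by fun_prop) _ _).const_mul _

theorem aestronglyMeasurable_skewGrad_heatZ_mul_rpow (s : ℝ) (n : ℤ) :
    AEStronglyMeasurable (fun t => skewGrad (heatZ t) n * t ^ s) (volume.restrict (Ioi 0)) :=
  (continuous_skewGrad_heatZ n).aestronglyMeasurable.mul
    (measurable_id.pow_const s).aestronglyMeasurable

theorem integral_exp_neg_mul_one_sub_cos_mul_sin {t : ℝ} (ht : t ≠ 0) :
    ∫ θ in (0 : ℝ)..Real.pi, Real.exp (-t * (1 - Real.cos θ)) * Real.sin θ =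
      (1 - Real.exp (-(2 * t))) / t := by
  have hderiv (θ : ℝ) : HasDerivAt (fun θ => -t⁻¹ * Real.exp (-t * (1 - Real.cos θ)))
      (Real.exp (-t * (1 - Real.cos θ)) * Real.sin θ) θ := by
    refine (((((Real.hasDerivAt_cos θ).const_sub 1).const_mul (-t)).exp).const_mul
      (-t⁻¹)).congr_deriv ?_
    field_simp
  rw [intervalIntegral.integral_eq_sub_of_hasDerivAt (fun θ _ => hderiv θ)
    (Continuous.intervalIntegrable (by fun_prop) _ _), Real.cos_pi, Real.cos_zero, sub_self,
    mul_zero, Real.exp_zero]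
  ring_nf

theorem one_sub_exp_neg_two_mul_div_le {t : ℝ} (ht : 0 < t) :
    (1 - Real.exp (-(2 * t))) / t ≤ 2 * min 1 t⁻¹ := by
  rw [mul_min_of_nonneg _ _ zero_le_two, le_min_iff, mul_one, ← div_eq_mul_inv]
  constructor
  · rw [div_le_iff₀ ht]
    linarith [Real.add_one_le_exp (-(2 * t))]
  · gcongr
    linarith [Real.exp_pos (-(2 * t))]

-- The factor `sin θ` produced by the gradient vanishes where `exp (-t * (1 - cos θ))` does not
-- decay; without it the rate would only be `t ^ (-1 / 2)`.
theorem abs_skewGrad_heatZ_le {t : ℝ} (ht : 0 < t) (n : ℤ) :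
    |skewGrad (heatZ t) n| ≤ 4 / Real.pi * min 1 t⁻¹ := by
  have hle : |∫ θ in (0 : ℝ)..Real.pi,
      Real.exp (-t * (1 - Real.cos θ)) * Real.sin θ * Real.sin (n * θ)| ≤
        ∫ θ in (0 : ℝ)..Real.pi, Real.exp (-t * (1 - Real.cos θ)) * Real.sin θ := by
    have hcont : Continuous fun θ => Real.exp (-t * (1 - Real.cos θ)) * Real.sin θ := by fun_prop
    rw [← Real.norm_eq_abs]
    refine intervalIntegral.norm_integral_le_of_norm_le Real.pi_pos.le
      (.of_forall fun θ hθ => ?_) (hcont.intervalIntegrable (μ := volume) _ _)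
    have hsin := Real.sin_nonneg_of_nonneg_of_le_pi hθ.1.le hθ.2
    rw [norm_mul, Real.norm_of_nonneg (by positivity)]
    exact mul_le_of_le_one_right (by positivity) (Real.abs_sin_le_one _)
  rw [integral_exp_neg_mul_one_sub_cos_mul_sin ht.ne'] at hle
  rw [skewGrad_heatZ, abs_mul, abs_of_nonneg (by positivity)]
  calc _ ≤ 2 / Real.pi * (2 * min 1 t⁻¹) := by
        gcongr
        exact hle.trans (one_sub_exp_neg_two_mul_div_le ht)
    _ = _ := by ring

theorem abs_skewGrad_heatZ_mul_rpow_le {t : ℝ} (ht : 0 < t) (s : ℝ) (n : ℤ) :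
    |skewGrad (heatZ t) n * t ^ s| ≤ 4 / Real.pi * (min 1 t⁻¹ * t ^ s) := by
  rw [abs_mul, abs_of_nonneg (Real.rpow_nonneg ht.le s), ← mul_assoc]
  gcongr
  exact abs_skewGrad_heatZ_le ht n

theorem ktZ_eq (n : ℤ) :
    ktZ n = (√Real.pi)⁻¹ * ∫ t in Ioi (0 : ℝ), skewGrad (heatZ t) n * t ^ (-(1 : ℝ) / 2) :=
  rfl

theorem exists_abs_ktZ_le : ∃ B, ∀ n, |ktZ n| ≤ B := by
  refine ⟨(√Real.pi)⁻¹ * ∫ t in Ioi (0 : ℝ), 4 / Real.pi * (min 1 t⁻¹ * t ^ (-(1 : ℝ) / 2)),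
    fun n => ?_⟩
  rw [ktZ_eq, abs_mul, abs_of_nonneg (by positivity)]
  gcongr
  rw [← Real.norm_eq_abs]
  refine norm_integral_le_of_norm_le ((integrableOn_Ioi_min_one_inv_mul_rpow
    (s := -(1 : ℝ) / 2) (by norm_num) (by norm_num)).const_mul _) ?_
  filter_upwards [ae_restrict_mem measurableSet_Ioi] with t ht
  exact abs_skewGrad_heatZ_mul_rpow_le ht _ n

/-- The transform `f ↦ Σ_{k≥0} q^{−(n+2k)/2} f(n+2k+1)`, turning functions on `ℤ` into radial
profiles on the tree: for `f = k̃_ℤ` and `n ≥ 0` it is `G(n)`. The argument `n` is allowed to be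
negative so that the recurrences below hold at `n = 0`. -/
noncomputable def radialSum (q : ℝ) (f : ℤ → ℝ) (n : ℤ) : ℝ :=
  ∑' k : ℕ, q ^ (-((n : ℝ) + 2 * k) / 2) * f (n + 2 * k + 1)

/-- The radial part of `𝓛`: its action on profiles `G` of almost radial functions
`x ↦ q^{−ℓ(x)/2} G(d(x,y)) q^{−ℓ(y)/2}`. -/
noncomputable def radialLap (q : ℝ) (G : ℤ → ℝ) : ℤ → ℝ :=
  fun n => G n - (q ^ (-(1 : ℝ) / 2) * G (n - 1) + q ^ ((1 : ℝ) / 2) * G (n + 1)) / 2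

theorem Gint_eq_radialSum (q n : ℕ) : Gint q n = radialSum q ktZ n := by
  simp only [Gint, radialSum, Int.cast_natCast]

section RadialSum

variable {q : ℝ}

theorem radialSum_mul_const (f : ℤ → ℝ) (c : ℝ) (n : ℤ) :
    radialSum q (fun m => f m * c) n = radialSum q f n * c := by
  simp only [radialSum, ← mul_assoc, tsum_mul_right]

theorem radialSum_const_mul (c : ℝ) (f : ℤ → ℝ) (n : ℤ) :
    radialSum q (fun m => c * f m) n = c * radialSum q f n := by
  simp only [mul_comm c, radialSum_mul_const]

theorem radialSum_comp_add (hq : 0 < q) (f : ℤ → ℝ) (n m : ℤ) :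
    radialSum q (fun j => f (j + m)) n = q ^ ((m : ℝ) / 2) * radialSum q f (n + m) := by
  rw [radialSum, radialSum, ← tsum_mul_left]
  refine tsum_congr fun k => ?_
  rw [← mul_assoc, ← Real.rpow_add hq]
  push_cast
  ring_nf

theorem summable_rpow_neg_add_two_mul_div_two (hq : 1 < q) (a : ℝ) :
    Summable fun k : ℕ => q ^ (-(a + 2 * k) / 2) := by
  have hq₀ : 0 < q := one_pos.trans hq
  refine ((summable_geometric_of_lt_one (inv_nonneg.2 hq₀.le)
    (inv_lt_one_of_one_lt₀ hq)).mul_left (q ^ (-a / 2))).congr fun k => ?_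
  rw [inv_pow, ← Real.rpow_natCast, ← Real.rpow_neg hq₀.le, ← Real.rpow_add hq₀]
  ring_nf

theorem abs_radialSum_term_le (hq : 0 < q) {f : ℤ → ℝ} {B : ℝ} (hf : ∀ m, |f m| ≤ B) (n : ℤ)
    (k : ℕ) :
    |q ^ (-((n : ℝ) + 2 * k) / 2) * f (n + 2 * k + 1)| ≤ q ^ (-((n : ℝ) + 2 * k) / 2) * B := by
  rw [abs_mul, abs_of_pos (Real.rpow_pos_of_pos hq _)]
  gcongr
  exact hf _

theorem summable_radialSum (hq : 1 < q) {f : ℤ → ℝ} {B : ℝ} (hf : ∀ m, |f m| ≤ B) (n : ℤ) :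
    Summable fun k : ℕ => q ^ (-((n : ℝ) + 2 * k) / 2) * f (n + 2 * k + 1) :=
  ((summable_rpow_neg_add_two_mul_div_two hq n).mul_right B).of_norm_bounded
    (abs_radialSum_term_le (one_pos.trans hq) hf n)

theorem radialSum_deltaZ (hq : 1 < q) {f : ℤ → ℝ} {B : ℝ} (hf : ∀ m, |f m| ≤ B) :
    radialSum q (deltaZ f) = radialLap q (radialSum q f) := by
  have hq₀ : 0 < q := one_pos.trans hq
  ext n
  have hadd := radialSum_comp_add hq₀ f n 1
  have hsub := radialSum_comp_add hq₀ f n (-1)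
  have hsum := (summable_radialSum hq hf n).hasSum.sub
    (((summable_radialSum hq (fun m => hf (m + 1)) n).hasSum.add
      (summable_radialSum hq (fun m => hf (m + -1)) n).hasSum).div_const 2)
  push_cast at hadd hsub
  rw [radialLap, add_comm (_ * _), sub_eq_add_neg n, ← hadd, ← hsub]
  refine (tsum_congr fun k => ?_).trans hsum.tsum_eq
  rw [deltaZ, sub_eq_add_neg (_ + 1)]
  ring

theorem radialSum_neg_one (hq : 1 < q) {f : ℤ → ℝ} {B : ℝ} (hf : ∀ m, |f m| ≤ B) (h₀ : f 0 = 0) :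
    radialSum q f (-1) = radialSum q f 1 := by
  rw [radialSum, (summable_radialSum hq hf (-1)).tsum_eq_zero_add]
  simp only [Nat.cast_zero, mul_zero, add_zero, neg_add_cancel, h₀, zero_add]
  refine tsum_congr fun k => ?_
  push_cast
  ring_nf

theorem radialSum_skewGrad_single (n : ℕ) :
    radialSum q (skewGrad (Pi.single 0 1)) n = if n = 0 then 1 else 0 := by
  have hterm (k : ℕ) : skewGrad (Pi.single 0 1) ((n : ℤ) + 2 * k + 1) =
      if n = 0 ∧ k = 0 then 1 else 0 := by
    have h₁ : (n : ℤ) + 2 * k + 1 - 1 = 0 ↔ n = 0 ∧ k = 0 := by omega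
    have h₂ : (n : ℤ) + 2 * k + 1 + 1 ≠ 0 := by omega
    simp only [skewGrad, Pi.single_apply, h₁, h₂, if_false, sub_zero]
  simp only [radialSum, hterm]
  split_ifs with hn <;> simp [hn]

theorem hasSum_radialSum {ι : Type*} (hq : 1 < q) {f : ι → ℤ → ℝ} {g : ℤ → ℝ} {b : ι → ℝ}
    (hb : Summable b) (hf : ∀ i m, |f i m| ≤ b i) (hg : ∀ m, HasSum (f · m) (g m)) (n : ℤ) :
    HasSum (fun i => radialSum q (f i) n) (radialSum q g n) := by
  have hq₀ : 0 < q := one_pos.trans hq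
  have hprod : Summable (uncurry fun (i : ι) (k : ℕ) =>
      q ^ (-((n : ℝ) + 2 * k) / 2) * f i (n + 2 * k + 1)) := by
    refine (hb.mul_of_nonneg (summable_rpow_neg_add_two_mul_div_two hq n)
      (fun i => (abs_nonneg _).trans (hf i 0))
      (fun k => Real.rpow_nonneg hq₀.le _)).of_norm_bounded ?_
    rintro ⟨i, k⟩
    rw [mul_comm (b _)]
    exact abs_radialSum_term_le hq₀ (hf i) n k
  have htsum : radialSum q g n = ∑' i, radialSum q (f i) n :=
    (tsum_congr fun k => ((hg _).mul_left _).tsum_eq.symm).trans hprod.tsum_comm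
  exact htsum ▸ hprod.prod.hasSum

section Integral

variable {α : Type*} [MeasurableSpace α] {μ : Measure α} {f : α → ℤ → ℝ} {b : α → ℝ}

theorem integrable_radialSum (hq : 1 < q) (hf : ∀ m, AEStronglyMeasurable (f · m) μ)
    (hle : ∀ᵐ a ∂μ, ∀ m, |f a m| ≤ b a) (hb : Integrable b μ) (n : ℤ) :
    Integrable (fun a => radialSum q (f a) n) μ := by
  have hw := summable_rpow_neg_add_two_mul_div_two hq n
  refine integrable_tsum_of_dominated (bound := fun k a => q ^ (-((n : ℝ) + 2 * k) / 2) * b a)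
    (fun k => (hf _).const_mul _) ?_ (.of_forall fun a => hw.mul_right _) ?_
  · filter_upwards [hle] with a ha using abs_radialSum_term_le (one_pos.trans hq) ha n
  · simpa only [tsum_mul_right] using hb.const_mul _

theorem integral_radialSum (hq : 1 < q) (hf : ∀ m, AEStronglyMeasurable (f · m) μ)
    (hle : ∀ᵐ a ∂μ, ∀ m, |f a m| ≤ b a) (hb : Integrable b μ) (n : ℤ) :
    ∫ a, radialSum q (f a) n ∂μ = radialSum q (fun m => ∫ a, f a m ∂μ) n := by
  have hw := summable_rpow_neg_add_two_mul_div_two hq n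
  have hsum := hasSum_integral_of_dominated_convergence
    (fun (k : ℕ) a => q ^ (-((n : ℝ) + 2 * k) / 2) * b a)
    (fun k => (hf (n + 2 * k + 1)).const_mul _)
    (fun k => by
      filter_upwards [hle] with a ha using abs_radialSum_term_le (one_pos.trans hq) ha n k)
    (.of_forall fun a => hw.mul_right _) (by simpa only [tsum_mul_right] using hb.const_mul _)
    (by filter_upwards [hle] with a ha using (summable_radialSum hq ha n).hasSum)
  simp only [integral_const_mul] at hsum
  exact hsum.tsum_eq.symm

end Integral

variable {s : ℝ}

theorem integrableOn_radialSum_skewGrad_heatZ_mul_rpow (hq : 1 < q) (hs : -1 < s) (hs' : s < 0)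
    (n : ℤ) : IntegrableOn (fun t => radialSum q (skewGrad (heatZ t)) n * t ^ s) (Ioi 0) := by
  simp only [← radialSum_mul_const]
  exact integrable_radialSum hq (aestronglyMeasurable_skewGrad_heatZ_mul_rpow s)
    (ae_restrict_of_forall_mem measurableSet_Ioi fun _ ht => abs_skewGrad_heatZ_mul_rpow_le ht s)
    ((integrableOn_Ioi_min_one_inv_mul_rpow hs hs').const_mul _) n

theorem integral_radialSum_skewGrad_heatZ_mul_rpow (hq : 1 < q) (hs : -1 < s) (hs' : s < 0)
    (n : ℤ) :
    ∫ t in Ioi (0 : ℝ), radialSum q (skewGrad (heatZ t)) n * t ^ s =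
      radialSum q (fun m => ∫ t in Ioi (0 : ℝ), skewGrad (heatZ t) m * t ^ s) n := by
  simp only [← radialSum_mul_const]
  exact integral_radialSum hq (aestronglyMeasurable_skewGrad_heatZ_mul_rpow s)
    (ae_restrict_of_forall_mem measurableSet_Ioi fun _ ht => abs_skewGrad_heatZ_mul_rpow_le ht s)
    ((integrableOn_Ioi_min_one_inv_mul_rpow hs hs').const_mul _) n

end RadialSum

end ZRiesz

namespace FlowTree

open ZRiesz

variable {q : ℕ} (S : FlowTree q)

theorem level_iterate_pred (n : ℕ) (x : S.V) : S.level (S.pred^[n] x) = S.level x + n := by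
  induction n with
  | zero => simp
  | succ n ih =>
    rw [iterate_succ_apply', level_pred, ih]
    push_cast
    ring

theorem level_add_eq_of_iterate_pred_eq {x y : S.V} {n m : ℕ}
    (h : S.pred^[n] x = S.pred^[m] y) : S.level x + n = S.level y + m := by
  rw [← level_iterate_pred, ← level_iterate_pred, h]

theorem le'_iff_exists_iterate_pred {x y : S.V} : S.le' y x ↔ ∃ k, S.pred^[k] y = x := by
  obtain ⟨n, m, hnm, hd⟩ := S.dist_spec x y
  have hlevel := S.level_add_eq_of_iterate_pred_eq hnm
  rw [le']
  constructor
  · intro h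
    obtain rfl : n = 0 := by omega
    exact ⟨m, hnm.symm⟩
  · rintro ⟨k, rfl⟩
    have hle := S.dist_le (S.pred^[k] y) y 0 k rfl
    rw [level_iterate_pred] at hlevel ⊢
    omega

theorem le'_pred {x y : S.V} (h : S.le' y x) : S.le' y (S.pred x) := by
  rw [le'_iff_exists_iterate_pred] at h ⊢
  obtain ⟨k, rfl⟩ := h
  exact ⟨k + 1, iterate_succ_apply' ..⟩

theorem exists_pred_eq_of_le' {x y : S.V} (h : S.le' y x) (hne : x ≠ y) :
    ∃ z, S.pred z = x ∧ S.le' y z := by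
  obtain ⟨_ | k, rfl⟩ := S.le'_iff_exists_iterate_pred.1 h
  · exact absurd rfl hne
  · exact ⟨S.pred^[k] y, (iterate_succ_apply' ..).symm, S.le'_iff_exists_iterate_pred.2 ⟨k, rfl⟩⟩

theorem eq_of_le'_of_level_eq {x y z : S.V} (hx : S.le' y x) (hz : S.le' y z)
    (h : S.level x = S.level z) : x = z := by
  obtain ⟨k, rfl⟩ := S.le'_iff_exists_iterate_pred.1 hx
  obtain ⟨m, rfl⟩ := S.le'_iff_exists_iterate_pred.1 hz
  rw [level_iterate_pred, level_iterate_pred] at h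
  obtain rfl : k = m := by omega
  rfl

theorem dist_pred_of_le' {x y : S.V} (h : S.le' y x) : S.dist (S.pred x) y = S.dist x y + 1 := by
  have h' := S.le'_pred h
  rw [le', level_pred] at h'
  rw [le'] at h
  omega

theorem dist_pred_of_not_le' {x y : S.V} (h : ¬S.le' y x) :
    S.dist (S.pred x) y + 1 = S.dist x y := by
  obtain ⟨_ | n, m, hnm, hd⟩ := S.dist_spec x y
  · exact absurd (S.le'_iff_exists_iterate_pred.2 ⟨m, hnm.symm⟩) h
  · have hle := S.dist_le (S.pred x) y n m hnm
    have htri := S.dist_triangle x (S.pred x) y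
    have hone := S.dist_le x (S.pred x) 1 0 rfl
    omega

/-- The successors of `x`. -/
noncomputable def succs (x : S.V) : Finset S.V := (S.succ_finite x).toFinset

theorem mem_succs {x z : S.V} : z ∈ S.succs x ↔ S.pred z = x :=
  Finite.mem_toFinset _

theorem card_succs (x : S.V) : (S.succs x).card = q := by
  rw [succs, ← ncard_eq_toFinset_card _ (S.succ_finite x)]
  exact S.succ_card x

theorem sigStarR_eq_sum (f : S.V → ℝ) (x : S.V) :
    S.sigStarR f x = (q : ℝ)⁻¹ * ∑ z ∈ S.succs x, f z := by
  rw [sigStarR, ← Finset.tsum_subtype' (S.succs x) f, succs, Finite.coe_toFinset]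

section SumSuccs

variable {M : Type*} [AddCommMonoid M] {x y z : S.V}

theorem sum_succs_of_forall_not_le' (h : ∀ z ∈ S.succs x, ¬S.le' y z) (g : ℤ → M) :
    ∑ z ∈ S.succs x, g (S.dist z y) = q • g (S.dist x y + 1) := by
  have hconst : ∀ z ∈ S.succs x, g (S.dist z y) = g (S.dist x y + 1) := fun z hz => by
    rw [← S.dist_pred_of_not_le' (h z hz), S.mem_succs.1 hz, Nat.cast_succ]
  rw [Finset.sum_congr rfl hconst, Finset.sum_const, card_succs]

theorem sum_succs_add_of_le' (hz : z ∈ S.succs x) (hzy : S.le' y z) (g : ℤ → M) :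
    ∑ z ∈ S.succs x, g (S.dist z y) + g (S.dist x y + 1) =
      g (S.dist x y - 1) + q • g (S.dist x y + 1) := by
  have hpred := S.mem_succs.1 hz
  have hdist := S.dist_pred_of_le' hzy
  have hrest : ∀ u ∈ (S.succs x).erase z, g (S.dist u y) = g (S.dist x y + 1) := fun u hu => by
    obtain ⟨hne, hu⟩ := Finset.mem_erase.1 hu
    have hu := S.mem_succs.1 hu
    have hlevel : S.level u = S.level z := by
      have hlevel_u := S.level_pred u
      have hlevel_z := S.level_pred z
      rw [hu] at hlevel_u
      rw [hpred] at hlevel_z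
      omega
    rw [← S.dist_pred_of_not_le' fun h => hne (S.eq_of_le'_of_level_eq h hzy hlevel), hu,
      Nat.cast_succ]
  rw [← Finset.add_sum_erase _ _ hz, Finset.sum_congr rfl hrest, add_assoc,
    Finset.sum_erase_add _ (fun _ => g (S.dist x y + 1)) hz, Finset.sum_const, card_succs, ← hpred,
    hdist, Nat.cast_succ, add_sub_cancel_right]

theorem pred_add_sum_succs {g : ℤ → M} (hg : g (-1) = g 1) (x y : S.V) :
    g (S.dist (S.pred x) y) + ∑ z ∈ S.succs x, g (S.dist z y) =
      g (S.dist x y - 1) + q • g (S.dist x y + 1) := by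
  by_cases hyx : S.le' y x
  · rw [S.dist_pred_of_le' hyx, Nat.cast_succ]
    rcases eq_or_ne x y with rfl | hne
    · have hsucc : ∀ z ∈ S.succs x, ¬S.le' x z := fun z hz h => by
        have hlevel := S.level_pred z
        rw [S.mem_succs.1 hz] at hlevel
        rw [le'] at h
        omega
      rw [S.sum_succs_of_forall_not_le' hsucc, dist_self, Nat.cast_zero, zero_add, zero_sub, hg]
    · obtain ⟨z, hz, hzy⟩ := S.exists_pred_eq_of_le' hyx hne
      rw [add_comm, S.sum_succs_add_of_le' (S.mem_succs.2 hz) hzy]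
  · have hsucc : ∀ z ∈ S.succs x, ¬S.le' y z := fun z hz h =>
      hyx (S.mem_succs.1 hz ▸ S.le'_pred h)
    rw [S.sum_succs_of_forall_not_le' hsucc, ← S.dist_pred_of_not_le' hyx, Nat.cast_succ,
      add_sub_cancel_right]

end SumSuccs

/-- The almost radial kernel `q^{−ℓ(x)/2} G(d(x,y)) q^{−ℓ(y)/2}`. The profile `G` lives on `ℤ` to
match `ZRiesz.radialLap`. -/
noncomputable def almostRadial (G : ℤ → ℝ) (x y : S.V) : ℝ :=
  (q : ℝ) ^ (-((S.level x : ℤ) : ℝ) / 2) * G (S.dist x y) *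
    (q : ℝ) ^ (-((S.level y : ℤ) : ℝ) / 2)

theorem rpow_neg_level_pred_div_two (hq : 0 < q) (x : S.V) :
    (q : ℝ) ^ (-((S.level (S.pred x) : ℤ) : ℝ) / 2) =
      (q : ℝ) ^ (-((S.level x : ℤ) : ℝ) / 2) * (q : ℝ) ^ (-(1 : ℝ) / 2) := by
  rw [← Real.rpow_add (by positivity), level_pred]
  push_cast
  ring_nf

theorem sigStarR_almostRadial (hq : 0 < q) (G : ℤ → ℝ) (x y : S.V) :
    S.sigStarR (S.almostRadial G · y) x = (q : ℝ) ^ (-((S.level x : ℤ) : ℝ) / 2) *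
      ((q : ℝ) ^ (-(1 : ℝ) / 2) * ∑ z ∈ S.succs x, G (S.dist z y)) *
        (q : ℝ) ^ (-((S.level y : ℤ) : ℝ) / 2) := by
  have hq₀ : (0 : ℝ) < q := by positivity
  rw [sigStarR_eq_sum, Finset.mul_sum, Finset.mul_sum, Finset.mul_sum, Finset.sum_mul]
  refine Finset.sum_congr rfl fun z hz => ?_
  have hpow : (q : ℝ) ^ (-(1 : ℝ) / 2) * (q : ℝ) ^ (-(1 : ℝ) / 2) = (q : ℝ)⁻¹ := by
    rw [← Real.rpow_add hq₀, ← Real.rpow_neg_one]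
    norm_num
  rw [almostRadial, ← S.mem_succs.1 hz, S.rpow_neg_level_pred_div_two hq, ← hpow]
  ring

theorem lapR_almostRadial (hq : 0 < q) {G : ℤ → ℝ} (hG : G (-1) = G 1) (y : S.V) :
    S.lapR (S.almostRadial G · y) = (S.almostRadial (radialLap q G) · y) := by
  ext x
  have hneighbours := S.pred_add_sum_succs hG x y
  have hsqrt : (q : ℝ) ^ ((1 : ℝ) / 2) = (q : ℝ) ^ (-(1 : ℝ) / 2) * q := by
    rw [← Real.rpow_add_one (by positivity)]
    norm_num
  rw [nsmul_eq_mul] at hneighbours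
  rw [lapR, S.sigStarR_almostRadial hq]
  simp only [almostRadial, radialLap, S.rpow_neg_level_pred_div_two hq, hsqrt]
  linear_combination -(q : ℝ) ^ (-((S.level x : ℤ) : ℝ) / 2) * (q : ℝ) ^ (-(1 : ℝ) / 2) *
    (q : ℝ) ^ (-((S.level y : ℤ) : ℝ) / 2) / 2 * hneighbours

theorem lapR_iterate_almostRadial_radialSum (hq : 1 < q) {f : ℤ → ℝ} {B : ℝ} (hf : ∀ n, |f n| ≤ B)
    (hodd : f.Odd) (n : ℕ) (y : S.V) :
    S.lapR^[n] (S.almostRadial (radialSum q f) · y) =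
      (S.almostRadial (radialSum q (deltaZ^[n] f)) · y) := by
  have hq₁ : (1 : ℝ) < q := by exact_mod_cast hq
  induction n generalizing f B with
  | zero => rfl
  | succ n ih =>
    rw [iterate_succ_apply, iterate_succ_apply, ← ih (abs_deltaZ_le hf) (odd_deltaZ hodd),
      radialSum_deltaZ hq₁ hf,
      S.lapR_almostRadial (by omega) (radialSum_neg_one hq₁ hf hodd.map_zero)]

theorem deltaMu_eq_almostRadial (hq : 0 < q) (y : S.V) :
    S.deltaMu y = (S.almostRadial (radialSum q (skewGrad (Pi.single 0 1))) · y) := by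
  have hq₀ : (0 : ℝ) < q := by positivity
  ext x
  rw [deltaMu, almostRadial, radialSum_skewGrad_single]
  rcases eq_or_ne x y with rfl | hne
  · rw [if_pos rfl, dist_self, if_pos rfl, mul_one, ← Real.rpow_add hq₀, wR, ← Real.rpow_intCast,
      ← Real.rpow_neg hq₀.le]
    ring_nf
  · rw [if_neg hne, if_neg fun h => hne (S.eq_of_dist_eq_zero x y h), mul_zero, zero_mul]

theorem Hker_eq_almostRadial (hq : 1 < q) (t : ℝ) (x y : S.V) :
    S.Hker t x y = S.almostRadial (radialSum q (skewGrad (heatZ t))) x y := by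
  have hq₁ : (1 : ℝ) < q := by exact_mod_cast hq
  have hbound := abs_skewGrad_le abs_single_zero_one_le
  have hsum := hasSum_radialSum hq₁ ((Real.summable_pow_div_factorial (2 * |t|)).mul_right _)
    (abs_pow_div_factorial_mul_iterate_deltaZ_le hbound t) (hasSum_skewGrad_heatZ t) (S.dist x y)
  rw [almostRadial, ← ((hsum.mul_left _).mul_right _).tsum_eq, Hker]
  refine tsum_congr fun n => ?_
  rw [S.deltaMu_eq_almostRadial (by omega), S.lapR_iterate_almostRadial_radialSum hq hbound
    (odd_skewGrad even_single_zero_one), radialSum_const_mul]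
  simp only [almostRadial]
  ring

theorem Hker_mul_const (hq : 1 < q) (t c : ℝ) (x y : S.V) :
    S.Hker t x y * c = (q : ℝ) ^ (-((S.level x : ℤ) : ℝ) / 2) *
      (radialSum q (skewGrad (heatZ t)) (S.dist x y) * c) *
        (q : ℝ) ^ (-((S.level y : ℤ) : ℝ) / 2) := by
  rw [S.Hker_eq_almostRadial hq, almostRadial]
  ring

theorem integrableOn_Hker_mul_rpow (hq : 1 < q) {s : ℝ} (hs : -1 < s) (hs' : s < 0) (x y : S.V) :
    IntegrableOn (fun t => S.Hker t x y * t ^ s) (Ioi 0) := by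
  have hint := integrableOn_radialSum_skewGrad_heatZ_mul_rpow (q := q) (by exact_mod_cast hq)
    hs hs' (S.dist x y)
  simp only [S.Hker_mul_const hq]
  exact (hint.const_mul _).mul_const _

theorem Kker_eq_almostRadial (hq : 1 < q) (x y : S.V) :
    S.Kker x y = S.almostRadial (radialSum q ktZ) x y := by
  have hintegral := integral_radialSum_skewGrad_heatZ_mul_rpow (q := q) (by exact_mod_cast hq)
    (s := -(1 : ℝ) / 2) (by norm_num) (by norm_num) (S.dist x y)
  simp only [Kker, S.Hker_mul_const hq]
  rw [integral_mul_const, integral_const_mul, hintegral, almostRadial, funext ktZ_eq,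
    radialSum_const_mul]
  ring

end FlowTree

open ZRiesz in
/-- the subordination integral defining the kernel of `𝓛^{−1/2}` converges and
`K(x,y) = q^{−ℓ(x)/2} G(d(x,y)) q^{−ℓ(y)/2}`, where
`G(n) = Σ_{k≥0} q^{−(n+2k)/2} k̃_ℤ(n+2k+1)` is absolutely convergent. -/
theorem L_negsqrt_kernel_formula {q : ℕ} (hq : 2 ≤ q) (S : FlowTree q) (x y : S.V) :
    MeasureTheory.IntegrableOn (fun t : ℝ => S.Hker t x y * t ^ (-(1:ℝ)/2)) (Set.Ioi 0) ∧
    (∀ n : ℕ, Summable (fun k : ℕ =>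
      |(q : ℝ) ^ (-((n : ℝ) + 2 * (k : ℝ))/2) * ktZ ((n : ℤ) + 2 * (k : ℤ) + 1)|)) ∧
    S.Kker x y = (q : ℝ) ^ (-((S.level x : ℤ) : ℝ)/2) * Gint q (S.dist x y) *
      (q : ℝ) ^ (-((S.level y : ℤ) : ℝ)/2) := by
  have hq₁ : (1 : ℝ) < q := by exact_mod_cast hq
  obtain ⟨B, hB⟩ := exists_abs_ktZ_le
  refine ⟨S.integrableOn_Hker_mul_rpow hq (by norm_num) (by norm_num) x y, fun n => ?_, ?_⟩
  · exact_mod_cast (summable_radialSum hq₁ hB n).abs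
  · rw [S.Kker_eq_almostRadial hq, FlowTree.almostRadial, Gint_eq_radialSum]
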